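/- Let X ⊆ A^n_k be an arrangement of linear subspaces with intersection poset P(X), and let I be an ideal defining X. For an injective R-module E, the augmented Roos complex Roos_*(H^0_{[*]}(E)) → H^0_I(E) → 0 is exact, where H^0_{[*]}(E) is the diagram p ↦ Γ_{I_p}(E) over P(X). -/

import Mathlib

/-- Chains of `m` elements of a preorder `P`: strictly increasing `m`-tuples. These are the
`(m-1)`-simplices of the order complex `K(P)`; for `m = 0` there is exactly one (empty) chain. -/
@[reducible] def pchains (P : Type*) [Preorder P] (m : ℕ) : Type _ :=
  {f : Fin m → P // StrictMono f}

/-- The boundary map of the augmented simplicial chain complex of the order complex of `P`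
with coefficients in `M`: the alternating sum over deletions of a vertex.  In degree `0`
this is the augmentation onto `pchains P 0 →₀ M ≃ M`. -/
noncomputable def simpBdry (A : Type*) [CommRing A] (M : Type*) [AddCommGroup M] [Module A M]
    (P : Type*) [Preorder P] (m : ℕ) :
    (pchains P (m + 1) →₀ M) →ₗ[A] (pchains P m →₀ M) :=
  Finsupp.lsum ℕ fun c =>
    ∑ i : Fin (m + 1), ((-1 : A) ^ (i : ℕ)) •
      (Finsupp.lsingle (⟨c.1 ∘ i.succAbove, c.2.comp (Fin.strictMono_succAbove i)⟩ : pchains P m))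

/-- Cycles of the augmented simplicial chain complex (everything in lowest degree). -/
noncomputable def simpCycles (A : Type*) [CommRing A] (M : Type*) [AddCommGroup M] [Module A M]
    (P : Type*) [Preorder P] : (m : ℕ) → Submodule A (pchains P m →₀ M)
  | 0 => ⊤
  | (m + 1) => LinearMap.ker (simpBdry A M P m)

/-- `simpHomology A M P m` is the reduced simplicial homology `H̃_{m-1}(K(P); M)` of the order
complex of `P` with coefficients in the `A`-module `M`, computed from the augmented chain
complex; with this convention `H̃_{-1}(∅; M) = M` (the case `m = 0`, `P = ∅`). -/
@[reducible] noncomputable def simpHomology (A : Type*) [CommRing A] (M : Type*) [AddCommGroup M] [Module A M]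
    (P : Type*) [Preorder P] (m : ℕ) : Type _ :=
  ↥(simpCycles A M P m) ⧸
    (Submodule.comap (simpCycles A M P m).subtype (LinearMap.range (simpBdry A M P m)))

/-- The `J`-torsion submodule `Γ_J(M) = H^0_J(M)`. -/
noncomputable def gammaTorsion {R : Type*} [CommRing R] (J : Ideal R) (M : Type*)
    [AddCommGroup M] [Module R M] : Submodule R M :=
  ⨆ r : ℕ, Submodule.torsionBySet R M ((J ^ r : Ideal R) : Set R)

/-- Degree-`m` part of the Roos complex of the diagram `H⁰_{[*]}(E) : p ↦ Γ_{I_p}(E)` over the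
intersection poset, realized inside `(chains) →₀ E`: the direct sum, over the chains
`p₀ < … < p_m`, of `Γ_{I_{p₀}}(E)`. (The transition maps of the diagram are the inclusions
`Γ_{I_p}(E) ⊆ Γ_{I_q}(E)` for `p ≤ q`, so the Roos differential is induced by the full
alternating sum of face maps `simpBdry`.) -/
noncomputable def roosGamma {n : ℕ} (k : Type) [Field k] {P : Type} [Preorder P]
    (ι : P → Ideal (MvPolynomial (Fin n) k)) (E : Type) [AddCommGroup E]
    [Module (MvPolynomial (Fin n) k) E] (m : ℕ) :
    Submodule (MvPolynomial (Fin n) k) (pchains P (m + 1) →₀ E) :=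
  ⨅ c : pchains P (m + 1),
    (gammaTorsion (ι (c.1 0)) E).comap (Finsupp.lapply c)


/-- The augmentation `Roos₀(H⁰_{[*]}(E)) → E`, summing the components. -/
noncomputable def gammaAug (n : ℕ) (k : Type) [Field k] (P : Type) [Preorder P]
    (E : Type) [AddCommGroup E] [Module (MvPolynomial (Fin n) k) E] :
    (pchains P 1 →₀ E) →ₗ[MvPolynomial (Fin n) k] E :=
  Finsupp.lsum ℕ fun _ => LinearMap.id

section gammaAlgebra

variable {R : Type} [CommRing R] [IsNoetherianRing R] {E : Type} [AddCommGroup E] [Module R E]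

theorem mem_gamma_iff (J : Ideal R) (e : E) :
    e ∈ gammaTorsion J E ↔ J ≤ (Ideal.torsionOf R E e).radical := by
  have hd : Directed (· ≤ ·)
      (fun r : ℕ => Submodule.torsionBySet R E ((J ^ r : Ideal R) : Set R)) := by
    refine Monotone.directed_le ?_
    intro a b hab
    exact Submodule.torsionBySet_le_torsionBySet_of_subset (Ideal.pow_le_pow_right hab)
  unfold gammaTorsion
  rw [Submodule.mem_iSup_of_directed _ hd]
  constructor
  · rintro ⟨r, hr⟩ x hx
    refine ⟨r, ?_⟩
    rw [Ideal.mem_torsionOf_iff]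
    exact (Submodule.mem_torsionBySet_iff _ _).1 hr ⟨x ^ r, Ideal.pow_mem_pow hx r⟩
  · intro h
    obtain ⟨r, hr⟩ := Ideal.exists_pow_le_of_le_radical_of_fg h (IsNoetherian.noetherian J)
    refine ⟨r, (Submodule.mem_torsionBySet_iff _ _).2 ?_⟩
    rintro ⟨a, ha⟩
    exact (Ideal.mem_torsionOf_iff _ _).1 (hr ha)

theorem gamma_le_of_le_radical {J K : Ideal R} (h : J ≤ K.radical) :
    gammaTorsion K E ≤ gammaTorsion J E := by
  intro e he
  rw [mem_gamma_iff] at he ⊢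
  exact h.trans (Ideal.radical_le_radical_iff.2 he)

theorem gamma_inf_le (J K : Ideal R) :
    gammaTorsion J E ⊓ gammaTorsion K E ≤ gammaTorsion (J ⊔ K) E := by
  rintro e ⟨h1, h2⟩
  have h1 : e ∈ gammaTorsion J E := h1
  have h2 : e ∈ gammaTorsion K E := h2
  rw [mem_gamma_iff] at h1 h2 ⊢
  exact sup_le h1 h2

theorem gamma_top : gammaTorsion (⊤ : Ideal R) E = ⊥ := by
  rw [eq_bot_iff]
  intro e he
  rw [mem_gamma_iff, top_le_iff, Ideal.radical_eq_top, Ideal.eq_top_iff_one,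
    Ideal.mem_torsionOf_iff, one_smul] at he
  exact he

theorem pow_inf_pow_le (I J : Ideal R) (r : ℕ) : ∃ s, I ^ s ⊓ J ^ r ≤ (I ⊓ J) ^ r := by
  obtain ⟨c, hc⟩ := Ideal.exists_pow_inf_eq_pow_smul I (J ^ r : Ideal R)
  refine ⟨c + r, ?_⟩
  have h := hc (c + r) (by omega)
  have h2 : I ^ (c + r) • (⊤ : Ideal R) = I ^ (c + r) := by simp
  rw [h2] at h
  rw [h, Nat.add_sub_cancel_left]
  calc I ^ r • (I ^ c • ⊤ ⊓ J ^ r) ≤ I ^ r * J ^ r := Ideal.mul_mono_right inf_le_right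
    _ = (I * J) ^ r := (mul_pow _ _ _).symm
    _ ≤ (I ⊓ J) ^ r := Ideal.pow_right_mono Ideal.mul_le_inf r

theorem gamma_inf_le_sup (hE : Module.Injective R E) (I J : Ideal R) :
    gammaTorsion (I ⊓ J) E ≤ gammaTorsion I E ⊔ gammaTorsion J E := by
  intro e he
  rw [mem_gamma_iff] at he
  obtain ⟨r, hr⟩ := Ideal.exists_pow_le_of_le_radical_of_fg he (IsNoetherian.noetherian _)
  obtain ⟨s, hs⟩ := pow_inf_pow_le I J r
  set A := I ^ s
  set B := J ^ r
  have hAB : A ⊓ B ≤ LinearMap.ker (LinearMap.toSpanSingleton R E e) := hs.trans hr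
  let f : (R ⧸ (A ⊓ B)) →ₗ[R] (R ⧸ A) × (R ⧸ B) :=
    (A ⊓ B).liftQ ((Submodule.mkQ A).prod (Submodule.mkQ B)) (by
      rw [LinearMap.ker_prod, Submodule.ker_mkQ, Submodule.ker_mkQ])
  have hf : Function.Injective f := by
    rw [← LinearMap.ker_eq_bot]
    refine Submodule.ker_liftQ_eq_bot _ _ _ ?_
    rw [LinearMap.ker_prod, Submodule.ker_mkQ, Submodule.ker_mkQ]
  let g : (R ⧸ (A ⊓ B)) →ₗ[R] E := (A ⊓ B).liftQ (LinearMap.toSpanSingleton R E e) hAB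
  obtain ⟨φ, hφ⟩ := hE.out f hf g
  have h1 := hφ (Submodule.Quotient.mk 1)
  have hg1 : g (Submodule.Quotient.mk 1) = e := by
    exact (Submodule.liftQ_apply _ _ _).trans (one_smul R e)
  have hf1 : f (Submodule.Quotient.mk 1) =
      (Submodule.Quotient.mk (1 : R), 0) + (0, Submodule.Quotient.mk (1 : R)) := by
    exact (Submodule.liftQ_apply _ _ _).trans (by simp)
  rw [hg1, hf1, map_add] at h1
  rw [← h1]
  refine Submodule.add_mem_sup ?_ ?_
  · rw [mem_gamma_iff]
    intro x hx
    refine ⟨s, ?_⟩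
    rw [Ideal.mem_torsionOf_iff, ← map_smul, Prod.smul_mk, smul_zero,
      ← Submodule.Quotient.mk_smul, (Submodule.Quotient.mk_eq_zero A).2, Prod.mk_zero_zero, map_zero]
    simpa using Ideal.pow_mem_pow hx s
  · rw [mem_gamma_iff]
    intro x hx
    refine ⟨r, ?_⟩
    rw [Ideal.mem_torsionOf_iff, ← map_smul, Prod.smul_mk, smul_zero,
      ← Submodule.Quotient.mk_smul, (Submodule.Quotient.mk_eq_zero B).2, Prod.mk_zero_zero, map_zero]
    simpa using Ideal.pow_mem_pow hx r

theorem gamma_finset_inf_le (hE : Module.Injective R E) {P : Type} (T : Finset P)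
    (J : P → Ideal R) :
    gammaTorsion (T.inf J) E ≤ ⨆ q ∈ T, gammaTorsion (J q) E := by
  classical
  induction T using Finset.induction_on with
  | empty => simp [gamma_top]
  | insert a s ha ih =>
    rw [Finset.inf_insert, Finset.iSup_insert]
    exact (gamma_inf_le_sup hE _ _).trans (sup_le_sup_left ih _)

theorem gamma_key (hE : Module.Injective R E) {P : Type} [PartialOrder P] [Fintype P]
    (ι : P → Ideal R) (horder : ∀ p q : P, p ≤ q ↔ ι q ≤ ι p)
    (hclosed : ∀ T : Finset P, T.Nonempty → (T.sup fun p => ι p) ≠ ⊤ →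
      ∃ q : P, ι q = T.sup fun p => ι p)
    (p : P) (U : Set P) (hU : IsLowerSet U) (hp : p ∉ U) :
    gammaTorsion (ι p) E ⊓ ⨆ q ∈ U, gammaTorsion (ι q) E ≤
      ⨆ q ∈ Set.Iio p, gammaTorsion (ι q) E := by
  classical
  set T : Finset P := U.toFinset with hT
  have h1 : (⨆ q ∈ U, gammaTorsion (ι q) E) ≤ gammaTorsion (T.inf ι) E := by
    refine iSup₂_le fun q hq => gamma_le_of_le_radical ?_
    exact (Finset.inf_le (by simpa [hT] using hq)).trans Ideal.le_radical
  refine (inf_le_inf_left _ h1).trans ((gamma_inf_le _ _).trans ?_)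
  have h2 : T.inf (fun q => ι p ⊔ ι q) ≤ (ι p ⊔ T.inf ι).radical := by
    rw [Ideal.radical_eq_sInf]
    refine le_sInf ?_
    rintro Q ⟨hQ, hQp⟩
    obtain ⟨q, hq, hqQ⟩ := hQp.inf_le'.1 (le_sup_right.trans hQ)
    exact (Finset.inf_le hq).trans (sup_le (le_sup_left.trans hQ) hqQ)
  refine (gamma_le_of_le_radical h2).trans ((gamma_finset_inf_le hE T _).trans ?_)
  refine iSup₂_le fun q hq => ?_
  have hq : q ∈ U := by simpa [hT] using hq
  by_cases ht : ι p ⊔ ι q = ⊤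
  · rw [ht, gamma_top]; exact bot_le
  · obtain ⟨r, hr⟩ := hclosed {p, q} (by simp) (by simpa using ht)
    have hr : ι r = ι p ⊔ ι q := by simpa using hr
    have hrp : r ≤ p := (horder _ _).2 (hr ▸ le_sup_left)
    have hrq : r ≤ q := (horder _ _).2 (hr ▸ le_sup_right)
    rw [← hr]
    refine le_iSup₂_of_le r ?_ le_rfl
    refine lt_of_le_of_ne hrp ?_
    rintro rfl
    exact hp (hU hrq hq)

end gammaAlgebra

section roosCombinatorics

variable {A : Type} [CommRing A] {M : Type} [AddCommGroup M] [Module A M]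
  {P : Type} [PartialOrder P]

/-- The face of a chain obtained by deleting the `i`-th vertex. -/
def pface {m : ℕ} (c : pchains P (m + 1)) (i : Fin (m + 1)) : pchains P m :=
  ⟨c.1 ∘ i.succAbove, c.2.comp (Fin.strictMono_succAbove i)⟩

theorem simpBdry_single {m : ℕ} (c : pchains P (m + 1)) (e : M) :
    simpBdry A M P m (Finsupp.single c e) =
      ∑ i : Fin (m + 1), ((-1 : A) ^ (i : ℕ)) • Finsupp.single (pface c i) e := by
  simp [simpBdry, pface]

/-- The coefficient module of a chain; `B` is used for the empty chain. -/
def pcoef (F : P → Submodule A M) (B : Submodule A M) : (m : ℕ) → pchains P m → Submodule A M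
  | 0, _ => B
  | _ + 1, c => F (c.1 0)

/-- The Roos complex on a subset `U`. -/
def roosC (F : P → Submodule A M) (B : Submodule A M) (U : Set P) (m : ℕ) :
    Submodule A (pchains P m →₀ M) where
  carrier := {f | ∀ c, f c ∈ pcoef F B m c ∧ (f c ≠ 0 → ∀ i, c.1 i ∈ U)}
  zero_mem' := by
    intro c
    simp
  add_mem' := by
    intro f g hf hg c
    refine ⟨add_mem (hf c).1 (hg c).1, fun h => ?_⟩
    by_cases h1 : f c = 0
    · refine (hg c).2 fun h2 => h ?_
      simp [h1, h2]
    · exact (hf c).2 h1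
  smul_mem' := by
    intro a f hf c
    refine ⟨Submodule.smul_mem _ _ (hf c).1, fun h => (hf c).2 fun h1 => h ?_⟩
    simp [h1]

theorem single_mem_roosC {F : P → Submodule A M} {B : Submodule A M} {U : Set P} {m : ℕ}
    {c : pchains P m} {e : M} (he : e ∈ pcoef F B m c) (hc : ∀ i, c.1 i ∈ U) :
    Finsupp.single c e ∈ roosC F B U m := by
  classical
  intro d
  by_cases h : c = d
  · subst h
    simpa using ⟨he, fun _ => hc⟩
  · simp [Finsupp.single_eq_of_ne' h]

theorem roosC_induct {F : P → Submodule A M} {B : Submodule A M} {U : Set P} {m : ℕ}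
    {X : Type} [AddCommGroup X] [Module A X] (T : (pchains P m →₀ M) →ₗ[A] X)
    (N : Submodule A X)
    (h : ∀ c e, e ∈ pcoef F B m c → (∀ i, c.1 i ∈ U) → T (Finsupp.single c e) ∈ N) :
    ∀ f ∈ roosC F B U m, T f ∈ N := by
  intro f hf
  rw [← Finsupp.sum_single f, map_finsuppSum]
  refine Submodule.sum_mem _ fun c hc => ?_
  exact h c _ (hf c).1 ((hf c).2 (Finsupp.mem_support_iff.1 hc))

theorem roosC_mono {F : P → Submodule A M} {B B' : Submodule A M} {U V : Set P} {m : ℕ}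
    (hUV : U ⊆ V) (hB : m = 0 → B ≤ B') : roosC F B U m ≤ roosC F B' V m := by
  intro f hf c
  refine ⟨?_, fun h i => hUV ((hf c).2 h i)⟩
  cases m with
  | zero => exact hB rfl (hf c).1
  | succ m => exact (hf c).1

/-- The sum of the values of the diagram on `U`. -/
def gsum (F : P → Submodule A M) (U : Set P) : Submodule A M := ⨆ q ∈ U, F q

theorem bdry_mem_roosC {F : P → Submodule A M} (hF : Monotone F) {B : Submodule A M}
    {U : Set P} {m : ℕ} : ∀ f ∈ roosC F B U (m + 1),
      simpBdry A M P m f ∈ roosC F (gsum F U) U m := by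
  refine roosC_induct _ _ ?_
  intro c e he hc
  rw [simpBdry_single]
  refine Submodule.sum_mem _ fun i _ => Submodule.smul_mem _ _ (single_mem_roosC ?_ ?_)
  · have he : e ∈ F (c.1 0) := he
    cases m with
    | zero => exact Submodule.mem_iSup_of_mem _ (Submodule.mem_iSup_of_mem (hc 0) he)
    | succ m => exact hF (c.2.monotone (Fin.zero_le _)) he
  · intro j
    exact hc _

/-- Append `p` to a chain lying strictly below `p`. -/
def psnoc {m : ℕ} (c : pchains P m) (p : P) (h : ∀ i, c.1 i < p) : pchains P (m + 1) :=
  ⟨Fin.snoc (α := fun _ => P) c.1 p, by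
    intro i j hij
    induction j using Fin.lastCases with
    | last =>
      induction i using Fin.lastCases with
      | last => exact absurd hij (lt_irrefl _)
      | cast i => simpa using h i
    | cast j =>
      induction i using Fin.lastCases with
      | last => exact absurd (hij.trans (Fin.castSucc_lt_last j)) (lt_irrefl _)
      | cast i => simpa using c.2 (Fin.castSucc_lt_castSucc_iff.1 hij)⟩

theorem psnoc_inj {m : ℕ} {c d : pchains P m} {p : P} {h : ∀ i, c.1 i < p}
    {h' : ∀ i, d.1 i < p} (he : psnoc c p h = psnoc d p h') : c = d := by
  apply Subtype.ext
  exact (Fin.snoc_injective2 (α := fun _ => P) (congrArg Subtype.val he)).1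

theorem pface_psnoc_last {m : ℕ} (c : pchains P m) (p : P) (h : ∀ i, c.1 i < p) :
    pface (psnoc c p h) (Fin.last m) = c := by
  apply Subtype.ext
  funext j
  simp [pface, psnoc]

theorem pface_psnoc_cast {m : ℕ} (c : pchains P (m + 1)) (p : P) (h : ∀ i, c.1 i < p)
    (i : Fin (m + 1)) :
    pface (psnoc c p h) i.castSucc = psnoc (pface c i) p (fun _ => h _) := by
  apply Subtype.ext
  funext j
  induction j using Fin.lastCases with
  | last => simp [pface, psnoc]
  | cast j => simp [pface, psnoc, Fin.castSucc_succAbove_castSucc]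

open Classical in
/-- Cone operator: append `p` to all chains strictly below `p`. -/
noncomputable def pcone (A : Type) [CommRing A] (M : Type) [AddCommGroup M] [Module A M]
    (p : P) (m : ℕ) : (pchains P m →₀ M) →ₗ[A] (pchains P (m + 1) →₀ M) :=
  Finsupp.lsum ℕ fun c =>
    if h : ∀ i, c.1 i < p then Finsupp.lsingle (psnoc c p h) else 0

theorem pcone_single {p : P} {m : ℕ} (c : pchains P m) (h : ∀ i, c.1 i < p) (e : M) :
    pcone A M p m (Finsupp.single c e) = Finsupp.single (psnoc c p h) e := by
  simp [pcone, h]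

theorem pcone_single_of_not {p : P} {m : ℕ} (c : pchains P m) (h : ¬ ∀ i, c.1 i < p) (e : M) :
    pcone A M p m (Finsupp.single c e) = 0 := by
  simp only [pcone, Finsupp.lsum_single, dif_neg h, LinearMap.zero_apply]

theorem pcone_apply {p : P} {m : ℕ} (y : pchains P m →₀ M) (d : pchains P m)
    (h : ∀ i, d.1 i < p) : pcone A M p m y (psnoc d p h) = y d := by
  classical
  have : (Finsupp.lapply (psnoc d p h)).comp (pcone A M p m) =
      (Finsupp.lapply d : (pchains P m →₀ M) →ₗ[A] M) := by
    apply Finsupp.lhom_ext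
    intro c e
    by_cases hc : ∀ i, c.1 i < p
    · rw [LinearMap.comp_apply, pcone_single c hc]
      by_cases hcd : c = d
      · subst hcd; simp
      · have : psnoc c p hc ≠ psnoc d p h := fun h' => hcd (psnoc_inj h')
        simp [Finsupp.single_eq_of_ne' hcd, Finsupp.single_eq_of_ne' this]
    · rw [LinearMap.comp_apply, pcone_single_of_not c hc]
      have hcd : c ≠ d := by rintro rfl; exact hc h
      simp [Finsupp.single_eq_of_ne' hcd]
  exact LinearMap.congr_fun this y

theorem bdry_pcone_zero {F : P → Submodule A M} {B : Submodule A M} {p : P} :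
    ∀ y ∈ roosC F B (Set.Iio p) 0, simpBdry A M P 0 (pcone A M p 0 y) = y := by
  have := roosC_induct (F := F) (B := B) (U := Set.Iio p) (m := 0)
    ((simpBdry A M P 0).comp (pcone A M p 0) - LinearMap.id) ⊥ (by
      intro c e _ hc
      rw [Submodule.mem_bot, LinearMap.sub_apply, LinearMap.comp_apply, pcone_single c hc,
        simpBdry_single, LinearMap.id_apply, sub_eq_zero]
      simp only [Fin.sum_univ_succ, Fin.sum_univ_zero]
      simpa using congrArg (fun d => Finsupp.single d e) (pface_psnoc_last c p hc))
  intro y hy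
  exact sub_eq_zero.1 (this y hy)

theorem bdry_pcone_succ {F : P → Submodule A M} {B : Submodule A M} {p : P} {m : ℕ} :
    ∀ y ∈ roosC F B (Set.Iio p) (m + 1), simpBdry A M P (m + 1) (pcone A M p (m + 1) y) =
      pcone A M p m (simpBdry A M P m y) + ((-1 : A) ^ (m + 1)) • y := by
  have := roosC_induct (F := F) (B := B) (U := Set.Iio p) (m := m + 1)
    ((simpBdry A M P (m + 1)).comp (pcone A M p (m + 1)) -
      ((pcone A M p m).comp (simpBdry A M P m) + ((-1 : A) ^ (m + 1)) • LinearMap.id)) ⊥ (by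
      intro c e _ hc
      have hc : ∀ i, c.1 i < p := hc
      rw [Submodule.mem_bot, LinearMap.sub_apply, LinearMap.comp_apply, pcone_single c hc,
        simpBdry_single, LinearMap.add_apply, LinearMap.smul_apply, LinearMap.id_apply,
        LinearMap.comp_apply, simpBdry_single, sub_eq_zero, Fin.sum_univ_castSucc,
        pface_psnoc_last, map_sum]
      simp only [Fin.val_last, Fin.val_castSucc]
      congr 1
      refine Finset.sum_congr rfl fun i _ => ?_
      rw [map_smul, pcone_single (pface c i) (fun _ => hc _), pface_psnoc_cast])
  intro y hy
  exact sub_eq_zero.1 (this y hy)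

theorem pcone_mem_roosC {F : P → Submodule A M} {B : Submodule A M} {p : P} {m : ℕ} {U : Set P}
    (hp : p ∈ U) (hU : IsLowerSet U) (hB : m = 0 → B ≤ F p) (B' : Submodule A M) :
    ∀ y ∈ roosC F B (Set.Iio p) m, pcone A M p m y ∈ roosC F B' U (m + 1) := by
  refine roosC_induct _ _ ?_
  intro c e he hc
  rw [pcone_single c hc]
  refine single_mem_roosC ?_ ?_
  · cases m with
    | zero => exact hB rfl he
    | succ m =>
      have : (psnoc c p hc).1 0 = c.1 0 := Fin.snoc_apply_zero (α := fun _ => P) p c.1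
      change e ∈ F ((psnoc c p hc).1 0)
      rw [this]
      exact he
  · intro i
    induction i using Fin.lastCases with
    | last => simpa [psnoc] using hp
    | cast i => simpa [psnoc] using hU (le_of_lt (hc i)) hp

theorem roosC_decomp {F : P → Submodule A M} (B : Submodule A M) {p : P} {m : ℕ} {U : Set P}
    (hp : Maximal (· ∈ U) p) :
    ∀ f ∈ roosC F B U (m + 1), ∃ a ∈ roosC F B (U \ {p}) (m + 1),
      ∃ y ∈ roosC F (F p) (Set.Iio p) m, f = a + pcone A M p m y := by
  have := roosC_induct (F := F) (B := B) (U := U) (m := m + 1) LinearMap.id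
    (roosC F B (U \ {p}) (m + 1) ⊔ (roosC F (F p) (Set.Iio p) m).map (pcone A M p m)) (by
      intro c e he hc
      rw [LinearMap.id_apply]
      by_cases hcp : c.1 (Fin.last m) = p
      · refine Submodule.mem_sup_right ?_
        let d : pchains P m := ⟨c.1 ∘ Fin.castSucc, c.2.comp Fin.strictMono_castSucc⟩
        have hd : ∀ i, d.1 i < p := fun i => by
          rw [← hcp]; exact c.2 (Fin.castSucc_lt_last i)
        have hcd : c = psnoc d p hd := by
          apply Subtype.ext
          funext j
          induction j using Fin.lastCases with
          | last => simpa [psnoc] using hcp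
          | cast j => simp [psnoc, d]
        refine ⟨Finsupp.single d e, single_mem_roosC ?_ hd, ?_⟩
        · cases m with
          | zero => rw [← hcp]; exact he
          | succ m => exact he
        · rw [pcone_single d hd, ← hcd]
      · refine Submodule.mem_sup_left (single_mem_roosC he fun i => ⟨hc i, fun hi => hcp ?_⟩)
        have hi : c.1 i = p := hi
        have h1 : p ≤ c.1 (Fin.last m) := hi ▸ c.2.monotone (Fin.le_last i)
        exact le_antisymm (hp.2 (hc _) h1) h1)
  intro f hf
  obtain ⟨a, ha, z, ⟨y, hy, rfl⟩, h⟩ := Submodule.mem_sup.1 (this f hf)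
  exact ⟨a, ha, y, hy, h.symm⟩

theorem pcone_eq_zero {F : P → Submodule A M} {B B' : Submodule A M} {p : P} {m : ℕ} {U : Set P}
    (hp : p ∉ U) {z : pchains P (m + 1) →₀ M} (hz : z ∈ roosC F B U (m + 1))
    {y : pchains P m →₀ M} (hy : y ∈ roosC F B' (Set.Iio p) m)
    (h : z + pcone A M p m y = 0) : y = 0 := by
  ext d
  by_contra hd
  have hlt : ∀ i, d.1 i < p := (hy d).2 hd
  have h1 := DFunLike.congr_fun h (psnoc d p hlt)
  rw [Finsupp.add_apply, pcone_apply] at h1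
  have h2 : z (psnoc d p hlt) = 0 := by
    by_contra h3
    have := (hz _).2 h3 (Fin.last m)
    simp [psnoc] at this
    exact hp this
  rw [h2, zero_add] at h1
  exact hd h1

theorem roos_exact [Finite P] {F : P → Submodule A M} (hF : Monotone F)
    (hkey : ∀ (p : P) (U : Set P), IsLowerSet U → p ∉ U →
      F p ⊓ gsum F U ≤ gsum F (Set.Iio p)) (U : Set P) (hU : IsLowerSet U) :
    ∀ m, ∀ f ∈ roosC F (gsum F U) U m, f ∈ simpCycles A M P m →
      ∃ g ∈ roosC F ⊥ U (m + 1), simpBdry A M P m g = f := by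
  induction U using WellFoundedLT.induction with
  | ind U ih =>
  intro m f hf hcyc
  cases m with
  | zero =>
    let c0 : pchains P 0 := ⟨Fin.elim0, fun i => i.elim0⟩
    have hc0 : ∀ c : pchains P 0, c = c0 := fun c => Subtype.ext (funext fun i => i.elim0)
    have hfe : f = Finsupp.single c0 (f c0) := by
      ext c; rw [hc0 c]; simp
    have hle : gsum F U ≤ ((roosC F ⊥ U 1).map (simpBdry A M P 0)).comap
        (Finsupp.lsingle c0) := by
      refine iSup₂_le fun q hq e he => ?_
      let c : pchains P 1 := ⟨fun _ => q, Subsingleton.strictMono _⟩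
      refine ⟨Finsupp.single c e, single_mem_roosC he fun _ => hq, ?_⟩
      rw [simpBdry_single]
      simp [hc0 (pface c 0)]
    obtain ⟨g, hg, hgf⟩ := hle (hf c0).1
    exact ⟨g, hg, hgf.trans hfe.symm⟩
  | succ m =>
    rcases U.eq_empty_or_nonempty with rfl | hne
    · refine ⟨0, zero_mem _, ?_⟩
      rw [map_zero]
      ext c
      by_contra h
      exact (hf c).2 (fun h' => h h'.symm) 0
    obtain ⟨p, hp⟩ := (Set.toFinite U).exists_maximal hne
    have hpU : p ∈ U := hp.1
    have hU0 : IsLowerSet (U \ {p}) := by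
      rintro a b hba ⟨ha, hap⟩
      refine ⟨hU hba ha, fun hb => hap ?_⟩
      have hb : b = p := hb
      subst hb
      exact le_antisymm (hp.2 ha hba) hba
    have hp0 : p ∉ U \ {p} := fun h => h.2 rfl
    have hlt0 : U \ {p} < U := ⟨Set.sdiff_subset, fun h => hp0 (h hpU)⟩
    have hIio : Set.Iio p ⊆ U \ {p} := fun q hq => ⟨hU (le_of_lt hq) hpU, ne_of_lt hq⟩
    have hltp : Set.Iio p < U := lt_of_le_of_lt hIio hlt0
    obtain ⟨a, ha, y, hy, rfl⟩ := roosC_decomp _ hp f hf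
    have hcyc : simpBdry A M P m (a + pcone A M p m y) = 0 := hcyc
    rw [map_add] at hcyc
    have hda := bdry_mem_roosC hF a ha
    -- the cone part is a cycle
    have hy' : y ∈ roosC F (gsum F (Set.Iio p)) (Set.Iio p) m ∧ y ∈ simpCycles A M P m ∧
        simpBdry A M P m a + ((-1 : A) ^ m) • y = 0 := by
      cases m with
      | zero =>
        rw [bdry_pcone_zero y hy] at hcyc
        refine ⟨fun c => ⟨?_, (hy c).2⟩, Submodule.mem_top, by simpa using hcyc⟩
        refine hkey p _ hU0 hp0 ⟨(hy c).1, ?_⟩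
        have h1 : y = - simpBdry A M P 0 a := (neg_eq_of_add_eq_zero_right hcyc).symm
        rw [h1]
        exact neg_mem (hda c).1
      | succ m =>
        rw [bdry_pcone_succ y hy] at hcyc
        have hy1 : y ∈ roosC F (gsum F (Set.Iio p)) (Set.Iio p) (m + 1) :=
          roosC_mono subset_rfl (by simp) hy
        have hdy := bdry_mem_roosC hF y hy
        have hy2 : y ∈ roosC F (gsum F (U \ {p})) (U \ {p}) (m + 1) :=
          roosC_mono hIio (by simp) hy
        have h0 : simpBdry A M P m y = 0 := by
          refine pcone_eq_zero hp0 (add_mem hda (Submodule.smul_mem _ ((-1 : A) ^ (m + 1)) hy2))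
            hdy ?_
          rw [← hcyc]; abel
        refine ⟨hy1, h0, ?_⟩
        rw [h0, map_zero, zero_add] at hcyc
        exact hcyc
    obtain ⟨hy1, hy2, hay⟩ := hy'
    obtain ⟨w, hw, hwy⟩ := ih _ hltp (isLowerSet_Iio p) m y hy1 hy2
    have hcw := bdry_pcone_succ w hw
    rw [hwy] at hcw
    have hw' : w ∈ roosC F (gsum F (U \ {p})) (U \ {p}) (m + 1) :=
      roosC_mono hIio (by simp) hw
    obtain ⟨g, hg, hgb⟩ := ih _ hlt0 hU0 (m + 1) (a + ((-1 : A) ^ m) • w)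
      (add_mem (roosC_mono subset_rfl (by simp) ha) (Submodule.smul_mem _ _ hw')) (by
        change simpBdry A M P m _ = 0
        rw [map_add, map_smul, hwy, hay])
    refine ⟨g + pcone A M p (m + 1) w, add_mem (roosC_mono Set.sdiff_subset (by simp) hg)
      (pcone_mem_roosC hpU hU (by simp) _ w hw), ?_⟩
    rw [map_add, hgb, hcw, pow_succ]
    simp only [mul_neg, mul_one, neg_smul]
    abel

end roosCombinatorics

/-- Let `X ⊆ 𝔸ⁿ_k` be an arrangement of linear subvarieties defined by an ideal `I`, with
intersection poset `P` (elements correspond to the intersections of irreducible components,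
ordered by inclusion of subspaces, i.e. reverse inclusion of the radical ideals `I_p`).
For every injective `R`-module `E` the augmented Roos complex
`Roos_*(H⁰_{[*]}(E)) → H⁰_I(E) → 0` is exact. -/
theorem stmt_10 (n : ℕ) (k : Type) [Field k]
    (P : Type) [PartialOrder P] [Fintype P]
    (ι : P → Ideal (MvPolynomial (Fin n) k))
    -- the poset is ordered by inclusion of the corresponding linear subvarieties
    (horder : ∀ p q : P, p ≤ q ↔ ι q ≤ ι p)
    -- each `I_p` is the (prime, radical) defining ideal of a linear subvariety
    (hlin : ∀ p : P, (ι p).IsPrime ∧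
      ∃ S : Set (MvPolynomial (Fin n) k),
        (∀ f ∈ S, f.totalDegree ≤ 1) ∧ ι p = Ideal.span S)
    -- `P` is closed under (nonempty, proper) intersections, i.e. sums of the ideals
    (hclosed : ∀ T : Finset P, T.Nonempty → (T.sup fun p => ι p) ≠ ⊤ →
      ∃ q : P, ι q = T.sup fun p => ι p)
    -- every element of `P` is the intersection of the irreducible components containing it
    (hcomp : ∀ p : P, ι p = sSup {J | ∃ m : P, IsMax m ∧ p ≤ m ∧ J = ι m})
    -- `I` is an ideal defining the arrangement `X = ⋃ₚ Xₚ`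
    (I : Ideal (MvPolynomial (Fin n) k)) (hI : I.radical = ⨅ p : P, ι p)
    -- `E` is an injective `R`-module
    (E : Type) [AddCommGroup E] [Module (MvPolynomial (Fin n) k) E]
    (hE : Module.Injective (MvPolynomial (Fin n) k) E) :
    -- the Roos differential restricts to the Roos subcomplex
    (∀ m : ℕ, ∀ f ∈ roosGamma k ι E (m + 1),
        simpBdry (MvPolynomial (Fin n) k) E P (m + 1) f ∈ roosGamma k ι E m) ∧
    -- the augmentation `Roos₀ → H⁰_I(E)` is well defined and surjective
    (∀ f ∈ roosGamma k ι E 0,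
        gammaAug n k P E f ∈ gammaTorsion I E) ∧
    (∀ e ∈ gammaTorsion I E, ∃ f ∈ roosGamma k ι E 0,
        gammaAug n k P E f = e) ∧
    -- exactness at degree `0` of the augmented complex
    (∀ f ∈ roosGamma k ι E 0,
        gammaAug n k P E f = (0 : E) →
        ∃ g ∈ roosGamma k ι E 1, simpBdry (MvPolynomial (Fin n) k) E P 1 g = f) ∧
    -- exactness in higher degrees
    (∀ m : ℕ, ∀ f ∈ roosGamma k ι E (m + 1),
        simpBdry (MvPolynomial (Fin n) k) E P (m + 1) f = 0 →
        ∃ g ∈ roosGamma k ι E (m + 2),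
          simpBdry (MvPolynomial (Fin n) k) E P (m + 2) g = f) := by
  classical
  have hmemR : ∀ (m : ℕ) (B : Submodule (MvPolynomial (Fin n) k) E) (f : pchains P (m + 1) →₀ E),
      f ∈ roosGamma k ι E m ↔
        f ∈ roosC (fun p => gammaTorsion (ι p) E) B Set.univ (m + 1) := by
    intro m B f
    unfold roosGamma
    rw [Submodule.mem_iInf]
    exact ⟨fun h c => ⟨h c, fun _ _ => trivial⟩, fun h c => (h c).1⟩
  have hF : Monotone (fun p : P => gammaTorsion (ι p) E) := fun p q hpq =>
    gamma_le_of_le_radical (((horder p q).1 hpq).trans Ideal.le_radical)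
  have hex := roos_exact hF (gamma_key hE ι horder hclosed) Set.univ isLowerSet_univ
  let c0 : pchains P 0 := ⟨Fin.elim0, fun i => i.elim0⟩
  have hc0 : ∀ c : pchains P 0, c = c0 := fun c => Subtype.ext (funext fun i => i.elim0)
  have haug : ∀ f : pchains P 1 →₀ E,
      simpBdry (MvPolynomial (Fin n) k) E P 0 f = Finsupp.single c0 (gammaAug n k P E f) := by
    intro f
    have : simpBdry (MvPolynomial (Fin n) k) E P 0 =
        (Finsupp.lsingle c0).comp (gammaAug n k P E) := by
      apply Finsupp.lhom_ext
      intro c e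
      rw [simpBdry_single]
      simp [hc0 (pface c 0), gammaAug]
    rw [this]
    rfl
  have hsum : ∀ e ∈ gammaTorsion I E,
      e ∈ gsum (fun p : P => gammaTorsion (ι p) E) Set.univ := by
    intro e he
    have h1 : (Finset.univ : Finset P).inf ι ≤ I.radical := by
      rw [hI, Finset.inf_univ_eq_iInf]
    have h2 := gamma_finset_inf_le hE Finset.univ ι (gamma_le_of_le_radical h1 he)
    simpa [gsum] using h2
  have hsum' : gsum (fun p : P => gammaTorsion (ι p) E) Set.univ ≤ gammaTorsion I E := by
    refine iSup₂_le fun q _ => gamma_le_of_le_radical ?_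
    calc I ≤ I.radical := Ideal.le_radical
      _ = ⨅ p : P, ι p := hI
      _ ≤ ι q := iInf_le _ q
      _ ≤ (ι q).radical := Ideal.le_radical
  refine ⟨?_, ?_, ?_, ?_, ?_⟩
  · intro m f hf
    exact (hmemR m _ _).2 (bdry_mem_roosC hF f ((hmemR (m + 1) ⊥ f).1 hf))
  · intro f hf
    have h := (bdry_mem_roosC hF f ((hmemR 0 ⊥ f).1 hf) c0).1
    rw [haug, Finsupp.single_eq_same] at h
    exact hsum' h
  · intro e he
    obtain ⟨g, hg, hge⟩ := hex 0 (Finsupp.single c0 e)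
      (single_mem_roosC (hsum e he) fun _ => trivial) Submodule.mem_top
    refine ⟨g, (hmemR 0 _ _).2 hg, ?_⟩
    rw [haug] at hge
    exact Finsupp.single_injective c0 hge
  · intro f hf h0
    obtain ⟨g, hg, hge⟩ := hex 1 f ((hmemR 0 _ _).1 hf) (by
      change simpBdry (MvPolynomial (Fin n) k) E P 0 f = 0
      rw [haug, h0, Finsupp.single_zero])
    exact ⟨g, (hmemR 1 _ _).2 hg, hge⟩
  · intro m f hf h0
    obtain ⟨g, hg, hge⟩ := hex (m + 2) f ((hmemR (m + 1) _ _).1 hf) h0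
    exact ⟨g, (hmemR (m + 2) _ _).2 hg, hge⟩
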